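/- Let G = (V, E) be a simple series-parallel graph (a two-terminal graph obtained from K₂ by finitely many series and parallel compositions, with no parallel edges and no loops) in which every vertex has degree at least 2. If G has exactly one vertex of degree 2, then G has a vertex of degree exactly 3. -/

import Mathlib

/-!
The hypotheses cannot hold together: every simple series-parallel graph has at least two
vertices of degree at most `2`, so under minimum degree `2` it has two vertices of degree
exactly `2`.

The existence of two such vertices is proved by induction on the series-parallel construction,
strengthened to the alternative `LowShape`. Either both terminals have degree at most `1` and
are joined by an edge (the shape of `K₂`), or there is an internal vertex of degree at most `2`
together with a second one, where the second one is again internal, or is a terminal of degree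
at most `1`, or is a terminal of degree at most `2` in a graph that has a source-sink edge.
Internal vertices of a part keep their degree in a composition.

* Series (`lowShape_series`): a part not of the shape of `K₂` supplies an internal vertex. If a
  part is of that shape then its outer terminal keeps degree at most `1`, and if both are, the
  merged vertex is an internal vertex of degree at most `2`.
* Parallel (`lowShape_parallel`): if neither part is of the shape of `K₂`, each supplies an
  internal vertex. If one part is, the other has no source-sink edge by simplicity, and a
  terminal of degree at most `1` in it has degree at most `2` in the composition.
-/

/-- A finite two-terminal multigraph: a finite vertex set, a finite edge-index set,
an endpoint map assigning to each edge an unordered pair of vertices, and two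
distinguished distinct vertices, the source and the sink. -/
structure TTGraph where
  V : Type
  E : Type
  [fV : Fintype V]
  [fE : Fintype E]
  [dV : DecidableEq V]
  ends : E → Sym2 V
  src : V
  snk : V
  hst : src ≠ snk

attribute [instance] TTGraph.fV TTGraph.fE TTGraph.dV

/-- `K₂`: two vertices joined by a single edge, the terminals being the two vertices. -/
def K2TT : TTGraph where
  V := Bool
  E := Unit
  ends := fun _ => s(false, true)
  src := false
  snk := true
  hst := by simp

/-- Series composition: identify the sink of `X` with the source of `Y`; the new
terminals are the source of `X` and the sink of `Y`. -/
def TTGraph.seriesComp (X Y : TTGraph) : TTGraph where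
  V := X.V ⊕ {v : Y.V // v ≠ Y.src}
  E := X.E ⊕ Y.E
  ends := Sum.elim (fun e => (X.ends e).map Sum.inl)
    (fun e => (Y.ends e).map fun v =>
      if h : v = Y.src then Sum.inl X.snk else Sum.inr ⟨v, h⟩)
  src := Sum.inl X.src
  snk := Sum.inr ⟨Y.snk, Ne.symm Y.hst⟩
  hst := by simp

/-- Parallel composition: identify the sources of `X` and `Y` and the sinks of `X`
and `Y`; the merged pairs are the new terminals. -/
def TTGraph.parallelComp (X Y : TTGraph) : TTGraph where
  V := X.V ⊕ {v : Y.V // v ≠ Y.src ∧ v ≠ Y.snk}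
  E := X.E ⊕ Y.E
  ends := Sum.elim (fun e => (X.ends e).map Sum.inl)
    (fun e => (Y.ends e).map fun v =>
      if h1 : v = Y.src then Sum.inl X.src
      else if h2 : v = Y.snk then Sum.inl X.snk
      else Sum.inr ⟨v, h1, h2⟩)
  src := Sum.inl X.src
  snk := Sum.inl X.snk
  hst := fun h => X.hst (Sum.inl_injective h)

/-- The class of series-parallel graphs: the two-terminal multigraphs obtained from
`K₂` by finitely many series and parallel compositions. -/
inductive IsSP : TTGraph → Prop
  | base : IsSP K2TT
  | series {X Y : TTGraph} : IsSP X → IsSP Y → IsSP (X.seriesComp Y)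
  | parallel {X Y : TTGraph} : IsSP X → IsSP Y → IsSP (X.parallelComp Y)

/-- The degree of a vertex, counted with edge multiplicity: the number of
edge-endpoints incident to it (a loop at `v` contributes 2). -/
def TTGraph.deg (G : TTGraph) (v : G.V) : ℕ :=
  ∑ e : G.E, (if G.ends e = s(v, v) then 2 else if v ∈ G.ends e then 1 else 0)

/-- A two-terminal multigraph is simple if no two of its edges have the same pair of
endpoints and it has no loops. -/
def TTGraph.Simple (G : TTGraph) : Prop :=
  Function.Injective G.ends ∧ ∀ e : G.E, ¬ (G.ends e).IsDiag

/-! ### Degrees under vertex maps -/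

/-- The degree of `w` with respect to an arbitrary endpoint map, loops counted twice;
`TTGraph.deg` is the case of `TTGraph.ends`. -/
def endDeg {E W : Type} [Fintype E] [DecidableEq W] (a : E → Sym2 W) (w : W) : ℕ :=
  ∑ e : E, (if a e = s(w, w) then 2 else if w ∈ a e then 1 else 0)

theorem endDeg_sum {E F W : Type} [Fintype E] [Fintype F] [DecidableEq W]
    (a : E → Sym2 W) (b : F → Sym2 W) (w : W) :
    endDeg (Sum.elim a b) w = endDeg a w + endDeg b w := by
  unfold endDeg
  rw [Fintype.sum_sum_type]
  rfl

theorem endDeg_map {E W W' : Type} [Fintype E] [DecidableEq W] [DecidableEq W']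
    (a : E → Sym2 W) {f : W → W'} (hf : Function.Injective f) (v : W) :
    endDeg (fun e => (a e).map f) (f v) = endDeg a v := by
  unfold endDeg
  refine Finset.sum_congr rfl fun e _ => ?_
  have h1 : (a e).map f = s(f v, f v) ↔ a e = s(v, v) := by
    rw [← Sym2.map_mk]
    exact (Sym2.map.injective hf).eq_iff
  have h2 : f v ∈ (a e).map f ↔ v ∈ a e := by
    simp [Sym2.mem_map, hf.eq_iff]
  simp only [h1, h2]

theorem endDeg_map_of_notMem {E W W' : Type} [Fintype E] [DecidableEq W']
    (a : E → Sym2 W) {f : W → W'} {w : W'} (hw : ∀ v, f v ≠ w) :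
    endDeg (fun e => (a e).map f) w = 0 := by
  unfold endDeg
  refine Finset.sum_eq_zero fun e _ => ?_
  have h2 : w ∉ (a e).map f := by
    simp only [Sym2.mem_map, not_exists, not_and]
    exact fun v _ => hw v
  have h1 : (a e).map f ≠ s(w, w) := fun h => h2 (h ▸ Sym2.mem_mk_left w w)
  simp [h1, h2]

/-! ### Inclusions of the two parts of a composition -/

/-- The map of `B` into the disjoint union of `A` and `B` with `s : B` identified with `a : A`. -/
def glueOne {A B : Type} [DecidableEq B] (a : A) (s : B) (v : B) : A ⊕ {v : B // v ≠ s} :=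
  if h : v = s then Sum.inl a else Sum.inr ⟨v, h⟩

/-- The map of `B` into the disjoint union of `A` and `B` with `s`, `t` in `B` identified with
`a`, `b` in `A` respectively. -/
def glueTwo {A B : Type} [DecidableEq B] (a b : A) (s t : B) (v : B) :
    A ⊕ {v : B // v ≠ s ∧ v ≠ t} :=
  if h1 : v = s then Sum.inl a else if h2 : v = t then Sum.inl b else Sum.inr ⟨v, h1, h2⟩

theorem glueOne_injective {A B : Type} [DecidableEq B] (a : A) (s : B) :
    Function.Injective (glueOne a s) := by
  intro u v h
  unfold glueOne at h
  split_ifs at h <;> simp_all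

theorem glueTwo_injective {A B : Type} [DecidableEq B] {a b : A} (hab : a ≠ b) (s t : B) :
    Function.Injective (glueTwo a b s t) := by
  intro u v h
  have hba := hab.symm
  unfold glueTwo at h
  split_ifs at h <;> simp_all

theorem inl_eq_glueOne {A B : Type} [DecidableEq B] {a : A} {s : B} {u : A} {v : B}
    (h : Sum.inl u = glueOne a s v) : u = a ∧ v = s := by
  unfold glueOne at h
  split_ifs at h <;> simp_all

theorem inl_eq_glueTwo {A B : Type} [DecidableEq B] {a b : A} {s t : B} {u : A} {v : B}
    (h : Sum.inl u = glueTwo a b s t v) : (u = a ∧ v = s) ∨ (u = b ∧ v = t) := by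
  unfold glueTwo at h
  split_ifs at h <;> simp_all

namespace TTGraph

/-- The inclusion of the first part into a series composition. -/
def serInl (X Y : TTGraph) (v : X.V) : (X.seriesComp Y).V := Sum.inl v

/-- The inclusion of the second part into a series composition. -/
def serInr (X Y : TTGraph) (v : Y.V) : (X.seriesComp Y).V := glueOne X.snk Y.src v

/-- The inclusion of the first part into a parallel composition. -/
def parInl (X Y : TTGraph) (v : X.V) : (X.parallelComp Y).V := Sum.inl v

/-- The inclusion of the second part into a parallel composition. -/
def parInr (X Y : TTGraph) (v : Y.V) : (X.parallelComp Y).V :=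
  glueTwo X.src X.snk Y.src Y.snk v

theorem serInl_injective (X Y : TTGraph) : Function.Injective (serInl X Y) :=
  Sum.inl_injective

theorem serInr_injective (X Y : TTGraph) : Function.Injective (serInr X Y) :=
  glueOne_injective X.snk Y.src

theorem parInl_injective (X Y : TTGraph) : Function.Injective (parInl X Y) :=
  Sum.inl_injective

theorem parInr_injective (X Y : TTGraph) : Function.Injective (parInr X Y) :=
  glueTwo_injective X.hst Y.src Y.snk

theorem serInl_eq_serInr {X Y : TTGraph} {u : X.V} {v : Y.V}
    (h : serInl X Y u = serInr X Y v) : u = X.snk ∧ v = Y.src := inl_eq_glueOne h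

theorem parInl_eq_parInr {X Y : TTGraph} {u : X.V} {v : Y.V}
    (h : parInl X Y u = parInr X Y v) : (u = X.src ∧ v = Y.src) ∨ (u = X.snk ∧ v = Y.snk) :=
  inl_eq_glueTwo h

theorem serInr_src (X Y : TTGraph) : serInr X Y Y.src = serInl X Y X.snk := dif_pos rfl

theorem parInr_src (X Y : TTGraph) : parInr X Y Y.src = parInl X Y X.src := dif_pos rfl

theorem parInr_snk (X Y : TTGraph) : parInr X Y Y.snk = parInl X Y X.snk :=
  (dif_neg Y.hst.symm).trans (dif_pos rfl)

theorem series_src (X Y : TTGraph) : (X.seriesComp Y).src = serInl X Y X.src := rfl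

theorem series_snk (X Y : TTGraph) : (X.seriesComp Y).snk = serInr X Y Y.snk :=
  (dif_neg Y.hst.symm :
    glueOne X.snk Y.src Y.snk = Sum.inr ⟨Y.snk, Y.hst.symm⟩).symm

theorem parallel_src (X Y : TTGraph) : (X.parallelComp Y).src = parInl X Y X.src := rfl

theorem parallel_snk (X Y : TTGraph) : (X.parallelComp Y).snk = parInl X Y X.snk := rfl

/-! ### Degrees in a composition -/

theorem deg_eq_endDeg (G : TTGraph) (v : G.V) : G.deg v = endDeg G.ends v := rfl

theorem deg_series (X Y : TTGraph) (w : (X.seriesComp Y).V) :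
    (X.seriesComp Y).deg w =
      endDeg (fun e => (X.ends e).map (serInl X Y)) w +
        endDeg (fun e => (Y.ends e).map (serInr X Y)) w :=
  endDeg_sum _ _ w

theorem deg_parallel (X Y : TTGraph) (w : (X.parallelComp Y).V) :
    (X.parallelComp Y).deg w =
      endDeg (fun e => (X.ends e).map (parInl X Y)) w +
        endDeg (fun e => (Y.ends e).map (parInr X Y)) w :=
  endDeg_sum _ _ w

theorem deg_serInl (X Y : TTGraph) {v : X.V} (h : v ≠ X.snk) :
    (X.seriesComp Y).deg (serInl X Y v) = X.deg v := by
  rw [deg_series, endDeg_map _ (serInl_injective X Y),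
    endDeg_map_of_notMem _ fun u hu => h (serInl_eq_serInr hu.symm).1, add_zero, deg_eq_endDeg]

theorem deg_serInr (X Y : TTGraph) {v : Y.V} (h : v ≠ Y.src) :
    (X.seriesComp Y).deg (serInr X Y v) = Y.deg v := by
  rw [deg_series, endDeg_map _ (serInr_injective X Y),
    endDeg_map_of_notMem _ fun u hu => h (serInl_eq_serInr hu).2, zero_add, deg_eq_endDeg]

theorem deg_series_mid (X Y : TTGraph) :
    (X.seriesComp Y).deg (serInl X Y X.snk) = X.deg X.snk + Y.deg Y.src := by
  rw [deg_series, endDeg_map _ (serInl_injective X Y), ← serInr_src X Y,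
    endDeg_map _ (serInr_injective X Y), deg_eq_endDeg, deg_eq_endDeg]

theorem deg_parInl (X Y : TTGraph) {v : X.V} (h : v ≠ X.src) (h' : v ≠ X.snk) :
    (X.parallelComp Y).deg (parInl X Y v) = X.deg v := by
  rw [deg_parallel, endDeg_map _ (parInl_injective X Y),
    endDeg_map_of_notMem _ fun u hu =>
      (parInl_eq_parInr hu.symm).elim (fun k => h k.1) (fun k => h' k.1),
    add_zero, deg_eq_endDeg]

theorem deg_parInr (X Y : TTGraph) {v : Y.V} (h : v ≠ Y.src) (h' : v ≠ Y.snk) :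
    (X.parallelComp Y).deg (parInr X Y v) = Y.deg v := by
  rw [deg_parallel, endDeg_map _ (parInr_injective X Y),
    endDeg_map_of_notMem _ fun u hu =>
      (parInl_eq_parInr hu).elim (fun k => h k.2) (fun k => h' k.2),
    zero_add, deg_eq_endDeg]

theorem deg_parallel_src (X Y : TTGraph) :
    (X.parallelComp Y).deg (X.parallelComp Y).src = X.deg X.src + Y.deg Y.src := by
  rw [parallel_src, deg_parallel, endDeg_map _ (parInl_injective X Y), ← parInr_src X Y,
    endDeg_map _ (parInr_injective X Y), deg_eq_endDeg, deg_eq_endDeg]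

theorem deg_parallel_snk (X Y : TTGraph) :
    (X.parallelComp Y).deg (X.parallelComp Y).snk = X.deg X.snk + Y.deg Y.snk := by
  rw [parallel_snk, deg_parallel, endDeg_map _ (parInl_injective X Y), ← parInr_snk X Y,
    endDeg_map _ (parInr_injective X Y), deg_eq_endDeg, deg_eq_endDeg]

/-- Simplicity passes to a part: `i` and `f` include its edges and its vertices. -/
theorem Simple.of_map {X Z : TTGraph} (hZ : Z.Simple) (i : X.E → Z.E)
    (hi : Function.Injective i) (f : X.V → Z.V)
    (h : ∀ e, Z.ends (i e) = (X.ends e).map f) : X.Simple := by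
  refine ⟨fun e e' he => hi (hZ.1 ?_), fun e he => hZ.2 (i e) ?_⟩
  · rw [h, h, he]
  · rw [h]
    revert he
    induction X.ends e with
    | _ a b =>
      intro hab
      have hab : a = b := hab
      simp [hab]

/-! ### Vertices of low degree -/

/-- An internal vertex of degree at most `2`. -/
def LowInt (G : TTGraph) (v : G.V) : Prop := v ≠ G.src ∧ v ≠ G.snk ∧ G.deg v ≤ 2

/-- The source and the sink are joined by an edge. -/
def HasST (G : TTGraph) : Prop := ∃ e, G.ends e = s(G.src, G.snk)

/-- The shape of `K₂`: adjacent terminals of degree at most `1`. -/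
def EdgeLike (G : TTGraph) : Prop := G.HasST ∧ G.deg G.src ≤ 1 ∧ G.deg G.snk ≤ 1

/-- The induction invariant. The bound on a terminal is `1` as long as the source and the sink
are not adjacent, since a later parallel composition with an edge may raise it by one. -/
def LowShape (G : TTGraph) : Prop :=
  G.EdgeLike ∨ ∃ v, G.LowInt v ∧
    ((∃ w, w ≠ v ∧ G.LowInt w) ∨ (G.deg G.src ≤ 1 ∨ G.deg G.snk ≤ 1) ∨
      (G.HasST ∧ (G.deg G.src ≤ 2 ∨ G.deg G.snk ≤ 2)))

theorem LowInt.series_inl {X : TTGraph} (Y : TTGraph) {v : X.V} (h : X.LowInt v) :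
    (X.seriesComp Y).LowInt (serInl X Y v) := by
  refine ⟨fun e => h.1 (serInl_injective X Y e), fun e => ?_, ?_⟩
  · rw [series_snk] at e
    exact h.2.1 (serInl_eq_serInr e).1
  · rw [deg_serInl X Y h.2.1]
    exact h.2.2

theorem LowInt.series_inr (X : TTGraph) {Y : TTGraph} {v : Y.V} (h : Y.LowInt v) :
    (X.seriesComp Y).LowInt (serInr X Y v) := by
  refine ⟨fun e => ?_, fun e => ?_, ?_⟩
  · rw [series_src] at e
    exact h.1 (serInl_eq_serInr e.symm).2
  · rw [series_snk] at e
    exact h.2.1 (serInr_injective X Y e)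
  · rw [deg_serInr X Y h.1]
    exact h.2.2

theorem LowInt.parallel_inl {X : TTGraph} (Y : TTGraph) {v : X.V} (h : X.LowInt v) :
    (X.parallelComp Y).LowInt (parInl X Y v) := by
  refine ⟨fun e => h.1 (parInl_injective X Y e), fun e => h.2.1 (parInl_injective X Y e), ?_⟩
  rw [deg_parInl X Y h.1 h.2.1]
  exact h.2.2

theorem LowInt.parallel_inr (X : TTGraph) {Y : TTGraph} {v : Y.V} (h : Y.LowInt v) :
    (X.parallelComp Y).LowInt (parInr X Y v) := by
  refine ⟨fun e => ?_, fun e => ?_, ?_⟩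
  · rw [parallel_src, ← parInr_src] at e
    exact h.1 (parInr_injective X Y e)
  · rw [parallel_snk, ← parInr_snk] at e
    exact h.2.1 (parInr_injective X Y e)
  · rw [deg_parInr X Y h.1 h.2.1]
    exact h.2.2

theorem lowShape_series {X Y : TTGraph} (hX : X.LowShape) (hY : Y.LowShape) :
    (X.seriesComp Y).LowShape := by
  have hsrc : (X.seriesComp Y).deg (X.seriesComp Y).src = X.deg X.src :=
    deg_serInl X Y X.hst
  have hsnk : (X.seriesComp Y).deg (X.seriesComp Y).snk = Y.deg Y.snk := by
    rw [series_snk, deg_serInr X Y Y.hst.symm]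
  right
  rcases hX with hX | ⟨v, hv, -⟩ <;> rcases hY with hY | ⟨w, hw, -⟩
  · refine ⟨serInl X Y X.snk, ⟨fun e => X.hst (serInl_injective X Y e).symm, fun e => ?_, ?_⟩,
      .inr (.inl (.inl ?_))⟩
    · rw [series_snk] at e
      exact Y.hst (serInl_eq_serInr e).2.symm
    · have := hX.2.2
      have := hY.2.1
      rw [deg_series_mid]
      omega
    · rw [hsrc]
      exact hX.2.1
  · exact ⟨_, hw.series_inr X, .inr (.inl (.inl (hsrc ▸ hX.2.1)))⟩
  · exact ⟨_, hv.series_inl Y, .inr (.inl (.inr (hsnk ▸ hY.2.2)))⟩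
  · exact ⟨_, hv.series_inl Y,
      .inl ⟨_, fun e => hw.1 (serInl_eq_serInr e.symm).2, hw.series_inr X⟩⟩

theorem ends_parallel_inl (X Y : TTGraph) (e : X.E) :
    (X.parallelComp Y).ends (Sum.inl e) = (X.ends e).map (parInl X Y) := rfl

theorem ends_parallel_inr (X Y : TTGraph) (e : Y.E) :
    (X.parallelComp Y).ends (Sum.inr e) = (Y.ends e).map (parInr X Y) := rfl

theorem HasST.parallel_inl {X : TTGraph} (Y : TTGraph) (h : X.HasST) :
    ∃ e : X.E, (X.parallelComp Y).ends (Sum.inl e) =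
      s((X.parallelComp Y).src, (X.parallelComp Y).snk) := by
  obtain ⟨e, he⟩ := h
  refine ⟨e, ?_⟩
  rw [ends_parallel_inl, he, Sym2.map_mk, parallel_src, parallel_snk]

theorem HasST.parallel_inr (X : TTGraph) {Y : TTGraph} (h : Y.HasST) :
    ∃ e : Y.E, (X.parallelComp Y).ends (Sum.inr e) =
      s((X.parallelComp Y).src, (X.parallelComp Y).snk) := by
  obtain ⟨e, he⟩ := h
  refine ⟨e, ?_⟩
  rw [ends_parallel_inr, he, Sym2.map_mk, parInr_src, parInr_snk, parallel_src, parallel_snk]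

theorem not_hasST_both {X Y : TTGraph} (hs : (X.parallelComp Y).Simple) (hX : X.HasST)
    (hY : Y.HasST) : False := by
  obtain ⟨e, he⟩ := hX.parallel_inl Y
  obtain ⟨e', he'⟩ := hY.parallel_inr X
  have := hs.1 (he.trans he'.symm)
  cases this

theorem lowShape_parallel {X Y : TTGraph} (hs : (X.parallelComp Y).Simple)
    (hX : X.LowShape) (hY : Y.LowShape) : (X.parallelComp Y).LowShape := by
  have hsrc := deg_parallel_src X Y
  have hsnk := deg_parallel_snk X Y
  right
  rcases hX with hX | ⟨v, hv, hv'⟩ <;> rcases hY with hY | ⟨w, hw, hw'⟩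
  · exact (not_hasST_both hs hX.1 hY.1).elim
  · obtain ⟨hst, h1, h2⟩ := hX
    refine ⟨_, hw.parallel_inr X, ?_⟩
    rcases hw' with ⟨u, huw, hu⟩ | h | h
    · refine .inl ⟨_, fun e => huw (parInr_injective X Y e), hu.parallel_inr X⟩
    · obtain ⟨e, he⟩ := hst.parallel_inl Y
      exact .inr (.inr ⟨⟨_, he⟩, by omega⟩)
    · exact (not_hasST_both hs hst h.1).elim
  · obtain ⟨hst, h1, h2⟩ := hY
    refine ⟨_, hv.parallel_inl Y, ?_⟩
    rcases hv' with ⟨u, huv, hu⟩ | h | h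
    · exact .inl ⟨_, fun e => huv (parInl_injective X Y e), hu.parallel_inl Y⟩
    · obtain ⟨e, he⟩ := hst.parallel_inr X
      exact .inr (.inr ⟨⟨_, he⟩, by omega⟩)
    · exact (not_hasST_both hs h.1 hst).elim
  · exact ⟨_, hv.parallel_inl Y, .inl ⟨_, fun e => (parInl_eq_parInr e.symm).elim
      (fun k => hw.1 k.2) (fun k => hw.2.1 k.2), hw.parallel_inr X⟩⟩

theorem lowShape_of_isSP {G : TTGraph} (h : IsSP G) (hs : G.Simple) : G.LowShape := by
  induction h with
  | base =>
    refine .inl ⟨⟨(), rfl⟩, ?_, ?_⟩ <;> decide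
  | @series X Y _ _ ihX ihY =>
    exact lowShape_series
      (ihX (hs.of_map Sum.inl Sum.inl_injective (serInl X Y) fun _ => rfl))
      (ihY (hs.of_map Sum.inr Sum.inr_injective (serInr X Y) fun _ => rfl))
  | @parallel X Y _ _ ihX ihY =>
    exact lowShape_parallel hs
      (ihX (hs.of_map Sum.inl Sum.inl_injective (parInl X Y) fun _ => rfl))
      (ihY (hs.of_map Sum.inr Sum.inr_injective (parInr X Y) fun _ => rfl))

theorem LowShape.exists_two {G : TTGraph} (h : G.LowShape) :
    ∃ v w : G.V, v ≠ w ∧ G.deg v ≤ 2 ∧ G.deg w ≤ 2 := by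
  rcases h with ⟨-, h1, h2⟩ | ⟨v, ⟨hv1, hv2, hv⟩, ⟨w, hwv, hw⟩ | (h | h) | ⟨-, h | h⟩⟩
  · exact ⟨_, _, G.hst, by omega, by omega⟩
  · exact ⟨v, w, hwv.symm, hv, hw.2.2⟩
  · exact ⟨v, _, hv1, hv, by omega⟩
  · exact ⟨v, _, hv2, hv, by omega⟩
  · exact ⟨v, _, hv1, hv, h⟩
  · exact ⟨v, _, hv2, hv, h⟩

end TTGraph

/-- If `G` is a simple series-parallel graph in which every vertex has degree at
least 2 and exactly one vertex has degree 2, then `G` has a vertex of degree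
exactly 3. -/
theorem sp_unique_degree_two_gives_degree_three (G : TTGraph) (hSP : IsSP G)
    (hs : G.Simple) (hmin : ∀ v : G.V, 2 ≤ G.deg v)
    (huniq : ∃! v : G.V, G.deg v = 2) :
    ∃ v : G.V, G.deg v = 3 := by
  obtain ⟨v, w, hvw, hv, hw⟩ := (TTGraph.lowShape_of_isSP hSP hs).exists_two
  exact absurd (huniq.unique (le_antisymm hv (hmin v)) (le_antisymm hw (hmin w))) hvw
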